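/- Fix an infinite data domain $D$. A register automaton $\mathcal A=(L,R,\Sigma,T)$ has finite sets $L$ of locations, $R$ of registers and $\Sigma$ of letters, and a set $T\subseteq L\times\Sigma\times\Phi(R)\times 2^R\times L$ of transitions, where $\Phi(R)$ consists of the guards built from $\mathsf{true}$ and the atoms $(=r)$, $r\in R$, by conjunction and negation; a pair $(\nu,d)$ with $\nu:R\to D$ and $d\in D$ satisfies $(=r)$ iff $\nu(r)=d$. From a configuration $(\ell,\nu)\in L\times D^R$ and on an input $(a,d)\in\Sigma\times D$, a transition $(\ell,a,\varphi,\mathsf{up},\ell')\in T$ may be fired if $(\nu,d)$ satisfies $\varphi$; it leads to $(\ell',\nu')$ where $\nu'(r)=d$ for $r\in\mathsf{up}$ and $\nu'(r)=\nu(r)$ otherwise. $\mathcal A$ is complete and deterministic if every configuration has exactly one successor configuration on every input. A nonempty data word $v\in(\Sigma\times D)^+$ is synchronizing for $\mathcal A$ if reading $v$ from all configurations in $L\times D^R$ leads to one and the same configuration; $\mathrm{data}(v)\subseteq D$ is the set of data values occurring in $v$. Let $\mathcal A=(L,R,\Sigma,T)$ be a complete deterministic register automaton with $k\ge 1$ registers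 over $D$, let $v=(a_1,d_1)\cdots(a_n,d_n)$ be a synchronizing data word for $\mathcal A$, and let $\ell\in L$. Then there exist an index $1\le m\le n$, transitions $t_1,\dots,t_m\in T$, and a nonempty set $\mathsf{up}\subseteq R$, such that for every register valuation $\nu$ with $\nu(r)\notin\mathrm{data}(v)$ for all $r\in R$, the unique run of $\mathcal A$ from $(\ell,\nu)$ over the prefix $(a_1,d_1)\cdots(a_m,d_m)$ of $v$ fires exactly the transitions $t_1,\dots,t_m$ in this order (uniquely so up to guards: any other sequence of transitions that induces the same run differs from $t_1,\dots,t_m$ at most in the guards). Moreover, each of $t_1,\dots,t_{m-1}$ has empty update set, $t_m$ has update set $\mathsf{up}$, and the guard of each $t_j$ is implied by $\bigwedge_{r\in R}\neg(=r)$, that is, it is satisfied by every $(\nu',d')\in D^R\times D$ with $\nu'(r)\ne d'$ for all $r\in R$. -/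

import Mathlib

namespace RegAut

/-- Register constraints over a set `R` of registers: built from the atom `true` and
the atoms `(= r)` for `r ∈ R` using conjunction and negation. -/
inductive Constraint (R : Type*) : Type _
  | tt : Constraint R
  | eqReg : R → Constraint R
  | conj : Constraint R → Constraint R → Constraint R
  | neg : Constraint R → Constraint R

/-- `φ.Sat ν d`: the pair `(ν, d)` of a register valuation and a datum satisfies `φ`. -/
def Constraint.Sat {R D : Type*} (ν : R → D) (d : D) : Constraint R → Prop
  | .tt => True
  | .eqReg r => ν r = d
  | .conj φ ψ => φ.Sat ν d ∧ ψ.Sat ν d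
  | .neg φ => ¬ φ.Sat ν d

/-- An element `(ℓ, a, φ, up, ℓ')` of `L × Σ × Φ(R) × 2^R × L`. -/
@[ext]
structure Transition (L R A : Type*) where
  source : L
  letter : A
  guard : Constraint R
  update : Set R
  target : L

/-- A register automaton with locations `L`, registers `R` and alphabet `A` is given by
its transition relation. -/
structure RegisterAutomaton (L R A : Type*) where
  transitions : Set (Transition L R A)

/-- A configuration: a location together with a register valuation. -/
abbrev Config (L R D : Type*) : Type _ := L × (R → D)

open Classical in
/-- The update `ν[up := d]` of a register valuation. -/
noncomputable def updateVal {R D : Type*} (ν : R → D) (up : Set R) (d : D) : R → D :=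
  fun r => if r ∈ up then d else ν r

/-- The transition `t` may be fired from the configuration `q` on the input `i`, and
leads to the configuration `q'`. -/
def Transition.Fires {L R A D : Type*} (t : Transition L R A) (q : Config L R D) (i : A × D)
    (q' : Config L R D) : Prop :=
  t.source = q.1 ∧ t.letter = i.1 ∧ t.guard.Sat q.2 i.2 ∧
    q' = (t.target, updateVal q.2 t.update i.2)

/-- The set `post(q, (a, d))` of successor configurations. -/
def post {L R A D : Type*} (𝓡 : RegisterAutomaton L R A) (q : Config L R D) (i : A × D) :
    Set (Config L R D) :=
  {q' | ∃ t ∈ 𝓡.transitions, t.Fires q i q'}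

/-- `post` of a set of configurations on a data word. -/
def postWord {L R A D : Type*} (𝓡 : RegisterAutomaton L R A) :
    Set (Config L R D) → List (A × D) → Set (Config L R D)
  | S, [] => S
  | S, i :: w => postWord 𝓡 (⋃ q ∈ S, post 𝓡 q i) w

/-- Completeness over the data domain `D`: every configuration has at least one successor
on every input. -/
def IsComplete (D : Type*) {L R A : Type*} (𝓡 : RegisterAutomaton L R A) : Prop :=
  ∀ (q : Config L R D) (i : A × D), (post 𝓡 q i).Nonempty

/-- Determinism over the data domain `D`: every configuration has at most one successor
on every input. -/
def IsDeterministic (D : Type*) {L R A : Type*} (𝓡 : RegisterAutomaton L R A) : Prop :=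
  ∀ (q : Config L R D) (i : A × D), (post 𝓡 q i).Subsingleton

/-- The set of data values occurring in a data word. -/
def data {A D : Type*} (w : List (A × D)) : Set D := {d | ∃ a, (a, d) ∈ w}

/-- A synchronizing data word: a nonempty data word sending the set of all
configurations to a single configuration. -/
def IsSynchronizing {L R A D : Type*} (𝓡 : RegisterAutomaton L R A) (w : List (A × D)) : Prop :=
  w ≠ [] ∧ ∃ q : Config L R D, postWord 𝓡 Set.univ w = {q}

/-- `IsRun 𝓡 q₀ w [q₁, …, qₙ]`: the sequence `q₀ q₁ ⋯ qₙ` is a run over the data word `w`. -/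
def IsRun {L R A D : Type*} (𝓡 : RegisterAutomaton L R A) :
    Config L R D → List (A × D) → List (Config L R D) → Prop
  | _, [], [] => True
  | q, i :: w, q' :: ρ => q' ∈ post 𝓡 q i ∧ IsRun 𝓡 q' w ρ
  | _, [], _ :: _ => False
  | _, _ :: _, [] => False

/-- `RunFires 𝓡 q₀ w [q₁, …, qₙ] [t₁, …, tₙ]`: each `tⱼ` is a transition of `𝓡` which
leads from `qⱼ₋₁` to `qⱼ` on the `j`-th input of `w`. -/
def RunFires {L R A D : Type*} (𝓡 : RegisterAutomaton L R A) :
    Config L R D → List (A × D) → List (Config L R D) → List (Transition L R A) → Prop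
  | _, [], [], [] => True
  | q, i :: w, q' :: ρ, t :: ts =>
      (t ∈ 𝓡.transitions ∧ t.Fires q i q') ∧ RunFires 𝓡 q' w ρ ts
  | _, _, _, _ => False

/-- Two transitions that differ at most in their guards. -/
def Transition.SameUpToGuard {L R A : Type*} (t t' : Transition L R A) : Prop :=
  t.source = t'.source ∧ t.letter = t'.letter ∧ t.update = t'.update ∧ t.target = t'.target

/-- The guard `φ` holds whenever the input datum differs from the contents of all
registers, i.e. `φ` is implied by the conjunction of all the inequalities `(≠ r)`. -/
def Constraint.HoldsOnFresh (D : Type*) {R : Type*} (φ : Constraint R) : Prop :=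
  ∀ (ν : R → D) (d : D), (∀ r, ν r ≠ d) → φ.Sat ν d

end RegAut

namespace RegAut

variable {L R A D : Type*}

theorem Constraint.sat_iff_of_fresh (φ : Constraint R) {ν ν' : R → D} {d d' : D}
    (h : ∀ r, ν r ≠ d) (h' : ∀ r, ν' r ≠ d') : φ.Sat ν d ↔ φ.Sat ν' d' := by
  induction φ with
  | tt => exact Iff.rfl
  | eqReg r => exact iff_of_false (h r) (h' r)
  | conj φ ψ ihφ ihψ => exact and_congr ihφ ihψ
  | neg φ ih => exact not_congr ih

theorem Constraint.Sat.holdsOnFresh {φ : Constraint R} {ν : R → D} {d : D}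
    (hφ : φ.Sat ν d) (h : ∀ r, ν r ≠ d) : φ.HoldsOnFresh D :=
  fun _ _ h' => (φ.sat_iff_of_fresh h h').1 hφ

theorem updateVal_empty (ν : R → D) (d : D) : updateVal ν ∅ d = ν := by
  funext r
  simp [updateVal]

theorem updateVal_injective_of_fresh {ν : R → D} {d : D} (h : ∀ r, ν r ≠ d) :
    Function.Injective fun up => updateVal ν up d := by
  have key (up : Set R) (r : R) : updateVal ν up d r = d ↔ r ∈ up := by
    by_cases hr : r ∈ up <;> simp [updateVal, hr, h r]
  intro up up' heq
  ext r
  rw [← key up r, ← key up' r]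
  exact Eq.congr_left (congrFun heq r)

theorem IsComplete.exists_fresh_transition [Nontrivial D] {𝓡 : RegisterAutomaton L R A}
    (hcomp : IsComplete D 𝓡) (ℓ : L) (a : A) :
    ∃ t ∈ 𝓡.transitions, t.source = ℓ ∧ t.letter = a ∧ t.guard.HoldsOnFresh D := by
  obtain ⟨x, y, hxy⟩ := exists_pair_ne D
  obtain ⟨_, t, ht, hs, hl, hg, _⟩ := hcomp (ℓ, fun _ => x) (a, y)
  exact ⟨t, ht, hs, hl, hg.holdsOnFresh fun _ => hxy⟩

theorem IsDeterministic.eq_of_fires {𝓡 : RegisterAutomaton L R A} (hdet : IsDeterministic D 𝓡)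
    {t t' : Transition L R A} (ht : t ∈ 𝓡.transitions) (ht' : t' ∈ 𝓡.transitions)
    {q p p' : Config L R D} {i : A × D} (hf : t.Fires q i p) (hf' : t'.Fires q i p') : p' = p :=
  hdet q i ⟨t', ht', hf'⟩ ⟨t, ht, hf⟩

theorem Transition.Fires.sameUpToGuard {t t' : Transition L R A} {q p : Config L R D} {i : A × D}
    (hf : t.Fires q i p) (hf' : t'.Fires q i p) (h : ∀ r, q.2 r ≠ i.2) : t'.SameUpToGuard t := by
  obtain ⟨hs, hl, _, he⟩ := hf
  obtain ⟨hs', hl', _, he'⟩ := hf'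
  obtain ⟨htgt, hupd⟩ := Prod.mk.inj (he'.symm.trans he)
  exact ⟨hs'.trans hs.symm, hl'.trans hl.symm, updateVal_injective_of_fresh h hupd, htgt⟩

theorem isRun_nil_iff {𝓡 : RegisterAutomaton L R A} {q : Config L R D}
    {ρ : List (Config L R D)} : IsRun 𝓡 q [] ρ ↔ ρ = [] := by
  cases ρ <;> simp [IsRun]

theorem isRun_cons_iff {𝓡 : RegisterAutomaton L R A} {q p : Config L R D} {i : A × D}
    {w : List (A × D)} {ρ : List (Config L R D)} (hpost : ∀ p', p' ∈ post 𝓡 q i ↔ p' = p)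
    (hρ : ∀ ρ', IsRun 𝓡 p w ρ' ↔ ρ' = ρ) (ρ' : List (Config L R D)) :
    IsRun 𝓡 q (i :: w) ρ' ↔ ρ' = p :: ρ := by
  cases ρ' with
  | nil => simp [IsRun]
  | cons p' ρ' =>
    rw [IsRun, hpost, List.cons.injEq]
    exact and_congr_right fun hp => hp ▸ hρ ρ'

theorem postWord_mono (𝓡 : RegisterAutomaton L R A) {S S' : Set (Config L R D)} (h : S ⊆ S')
    (w : List (A × D)) : postWord 𝓡 S w ⊆ postWord 𝓡 S' w := by
  induction w generalizing S S' with
  | nil => exact h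
  | cons i w ih => exact ih (Set.biUnion_subset_biUnion_left h)

/-- From the location `ℓ`, all runs whose initial valuation avoids the data of `w` fire the same
transitions `ts` up to and including the first register update, which writes to `up`. -/
def HasUniformFirstUpdate (𝓡 : RegisterAutomaton L R A) (w : List (A × D)) (ℓ : L) : Prop :=
  ∃ m : ℕ, 1 ≤ m ∧ m ≤ w.length ∧
    ∃ ts : List (Transition L R A), ts.length = m ∧ (∀ t ∈ ts, t ∈ 𝓡.transitions) ∧
    ∃ up : Set R, up.Nonempty ∧
      (∀ ν : R → D, (∀ r : R, ν r ∉ data w) →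
        ∃ ρ : List (Config L R D),
          (∀ ρ', IsRun 𝓡 (ℓ, ν) (w.take m) ρ' ↔ ρ' = ρ) ∧
          RunFires 𝓡 (ℓ, ν) (w.take m) ρ ts ∧
          (∀ ts', RunFires 𝓡 (ℓ, ν) (w.take m) ρ ts' →
            List.Forall₂ Transition.SameUpToGuard ts' ts)) ∧
      (∀ t ∈ ts, t.guard.HoldsOnFresh D) ∧
      (∀ t ∈ ts.dropLast, t.update = ∅) ∧
      (∀ t ∈ ts.getLast?, t.update = up)

/-- Prepending a fresh transition to the unique run over a suffix. -/
theorem exists_unique_run_cons {𝓡 : RegisterAutomaton L R A} (hdet : IsDeterministic D 𝓡)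
    {t : Transition L R A} (ht : t ∈ 𝓡.transitions) {q p : Config L R D} {i : A × D}
    (hf : t.Fires q i p) (hfresh : ∀ r, q.2 r ≠ i.2)
    {w : List (A × D)} {ts : List (Transition L R A)}
    (h : ∃ ρ : List (Config L R D), (∀ ρ', IsRun 𝓡 p w ρ' ↔ ρ' = ρ) ∧ RunFires 𝓡 p w ρ ts ∧
      ∀ ts', RunFires 𝓡 p w ρ ts' → List.Forall₂ Transition.SameUpToGuard ts' ts) :
    ∃ ρ : List (Config L R D), (∀ ρ', IsRun 𝓡 q (i :: w) ρ' ↔ ρ' = ρ) ∧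
      RunFires 𝓡 q (i :: w) ρ (t :: ts) ∧
      ∀ ts', RunFires 𝓡 q (i :: w) ρ ts' →
        List.Forall₂ Transition.SameUpToGuard ts' (t :: ts) := by
  obtain ⟨ρ, hrun, hfires, huniq⟩ := h
  refine ⟨p :: ρ, isRun_cons_iff (fun p' => ⟨?_, ?_⟩) hrun, ⟨⟨ht, hf⟩, hfires⟩, ?_⟩
  · rintro ⟨t', ht', hf'⟩
    exact hdet.eq_of_fires ht ht' hf hf'
  · rintro rfl
    exact ⟨t, ht, hf⟩
  · rintro (_ | ⟨t', ts'⟩) hts'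
    · exact hts'.elim
    · exact .cons (hf.sameUpToGuard hts'.1.2 hfresh) (huniq ts' hts'.2)

theorem exists_unique_run_nil (𝓡 : RegisterAutomaton L R A) (q : Config L R D) :
    ∃ ρ : List (Config L R D), (∀ ρ', IsRun 𝓡 q [] ρ' ↔ ρ' = ρ) ∧ RunFires 𝓡 q [] ρ [] ∧
      ∀ ts', RunFires 𝓡 q [] ρ ts' → List.Forall₂ Transition.SameUpToGuard ts' [] := by
  refine ⟨[], fun _ => isRun_nil_iff, trivial, ?_⟩
  rintro (_ | ⟨t', ts'⟩) hts'
  · exact .nil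
  · exact hts'.elim

/-- Either the runs from fresh valuations share their first register update, or they keep every
fresh valuation unchanged. -/
theorem hasUniformFirstUpdate_or_preserves [Nontrivial D] {𝓡 : RegisterAutomaton L R A}
    (hcomp : IsComplete D 𝓡) (hdet : IsDeterministic D 𝓡) (w : List (A × D)) (ℓ : L) :
    HasUniformFirstUpdate 𝓡 w ℓ ∨
      ∃ ℓ' : L, ∀ ν : R → D, (∀ r, ν r ∉ data w) → (ℓ', ν) ∈ postWord 𝓡 {(ℓ, ν)} w := by
  induction w generalizing ℓ with
  | nil => exact .inr ⟨ℓ, fun ν _ => rfl⟩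
  | cons i w ih =>
    obtain ⟨t, ht, hs, hl, hg⟩ := hcomp.exists_fresh_transition ℓ i.1
    have hne {ν : R → D} (hν : ∀ r, ν r ∉ data (i :: w)) (r : R) : ν r ≠ i.2 :=
      fun h => hν r ⟨i.1, by simp [h]⟩
    have hfires {ν : R → D} (hν : ∀ r, ν r ∉ data (i :: w)) :
        t.Fires (ℓ, ν) i (t.target, updateVal ν t.update i.2) :=
      ⟨hs, hl, hg ν i.2 (hne hν), rfl⟩
    rcases t.update.eq_empty_or_nonempty with hup | hup
    · have htail {ν : R → D} (hν : ∀ r, ν r ∉ data (i :: w)) (r : R) : ν r ∉ data w :=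
        fun ⟨a, ha⟩ => hν r ⟨a, List.mem_cons_of_mem _ ha⟩
      simp only [hup, updateVal_empty] at hfires
      rcases ih t.target with ⟨m, hm, hmw, ts, hts, hmem, up, hne_up, hrun, hguard, hinit, hlast⟩ |
        ⟨ℓ', hℓ'⟩
      · have hts0 : ts ≠ [] := by
          rintro rfl
          simp at hts
          omega
        refine .inl ⟨m + 1, by omega, by simpa using hmw, t :: ts, by simpa using hts,
          List.forall_mem_cons.2 ⟨ht, hmem⟩, up, hne_up, fun ν hν => ?_,
          List.forall_mem_cons.2 ⟨hg, hguard⟩, ?_, ?_⟩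
        · exact exists_unique_run_cons hdet ht (hfires hν) (hne hν) (hrun ν (htail hν))
        · rw [List.dropLast_cons_of_ne_nil hts0]
          exact List.forall_mem_cons.2 ⟨hup, hinit⟩
        · rwa [List.getLast?_cons_of_ne_nil hts0]
      · refine .inr ⟨ℓ', fun ν hν => postWord_mono 𝓡 ?_ w (hℓ' ν (htail hν))⟩
        rw [Set.singleton_subset_iff]
        exact Set.mem_biUnion rfl ⟨t, ht, hfires hν⟩
    · refine .inl ⟨1, le_rfl, by simp, [t], rfl, by simpa using ht, t.update, hup, fun ν hν => ?_,
        by simpa using hg, by simp, by simp⟩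
      exact exists_unique_run_cons hdet ht (hfires hν) (hne hν) (exists_unique_run_nil 𝓡 _)

theorem finite_data (w : List (A × D)) : (data w).Finite := by
  refine (w.map Prod.snd).finite_toSet.subset ?_
  rintro d ⟨a, ha⟩
  exact List.mem_map.2 ⟨(a, d), ha, rfl⟩

end RegAut

theorem stmt16 {L R A D : Type*} [Finite L] [Finite R] [Nonempty R] [Finite A] [Infinite D]
    (𝓡 : RegAut.RegisterAutomaton L R A)
    (hcomp : RegAut.IsComplete D 𝓡) (hdet : RegAut.IsDeterministic D 𝓡)
    (v : List (A × D)) (hv : RegAut.IsSynchronizing 𝓡 v) (ℓ : L) :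
    ∃ m : ℕ, 1 ≤ m ∧ m ≤ v.length ∧
    ∃ ts : List (RegAut.Transition L R A), ts.length = m ∧ (∀ t ∈ ts, t ∈ 𝓡.transitions) ∧
    ∃ up : Set R, up.Nonempty ∧
      (∀ ν : R → D, (∀ r : R, ν r ∉ RegAut.data v) →
        ∃ ρ : List (RegAut.Config L R D),
          (∀ ρ', RegAut.IsRun 𝓡 (ℓ, ν) (v.take m) ρ' ↔ ρ' = ρ) ∧
          RegAut.RunFires 𝓡 (ℓ, ν) (v.take m) ρ ts ∧
          (∀ ts', RegAut.RunFires 𝓡 (ℓ, ν) (v.take m) ρ ts' →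
            List.Forall₂ RegAut.Transition.SameUpToGuard ts' ts)) ∧
      (∀ t ∈ ts, t.guard.HoldsOnFresh D) ∧
      (∀ t ∈ ts.dropLast, t.update = ∅) ∧
      (∀ t ∈ ts.getLast?, t.update = up) := by
  refine (RegAut.hasUniformFirstUpdate_or_preserves hcomp hdet v ℓ).resolve_right ?_
  rintro ⟨ℓ', hℓ'⟩
  obtain ⟨-, q, hq⟩ := hv
  obtain ⟨x, hx, y, hy, hxy⟩ := (RegAut.finite_data v).infinite_compl.nontrivial
  have key {z : D} (hz : z ∉ RegAut.data v) : (ℓ', fun _ : R => z) = q := by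
    have h := RegAut.postWord_mono 𝓡 (Set.subset_univ _) v (hℓ' (fun _ => z) fun _ => hz)
    rwa [hq] at h
  have hconst := congrArg Prod.snd ((key hx).trans (key hy).symm)
  exact hxy (congrFun hconst (Classical.arbitrary R))
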